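/- For every compact subset K of ℂ² ∖ {0}, the Eguchi–Hanson potentials F_ε converge uniformly on K to the Euclidean potential as ε → 0⁺: sup_{z ∈ K} |F_ε(z) − ‖z‖²| tends to 0 as ε tends to 0 from the right. -/

import Mathlib

open Filter Topology

/-- The Eguchi–Hanson potential `F ε` on `ℂ² ∖ {0}`. -/
noncomputable def eguchiHanson (ε : ℝ) (z : EuclideanSpace ℂ (Fin 2)) : ℝ :=
  Real.sqrt (‖z‖ ^ 4 + ε ^ 2) +
    ε * Real.log (‖z‖ ^ 2 / (Real.sqrt (‖z‖ ^ 4 + ε ^ 2) + ε))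

/-!
With `r = ‖z‖²` and `t = ε / r`, the logarithm in `F_ε(z)` is `-arsinh t`, so that
`F_ε(z) = r (√(1 + t²) - t arsinh t)`. Both `√(1 + t²) - 1` and `t arsinh t` lie in `[0, t²]`,
whence `|F_ε(z) - ‖z‖²| ≤ r t² = ε² / ‖z‖²`, which is uniformly small as long as `z` stays away
from `0`.
-/

theorem mul_arsinh_nonneg (x : ℝ) : 0 ≤ x * Real.arsinh x := by
  rcases le_total 0 x with hx | hx
  · exact mul_nonneg hx (Real.arsinh_nonneg_iff.2 hx)
  · exact mul_nonneg_of_nonpos_of_nonpos hx (Real.arsinh_nonpos_iff.2 hx)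

theorem arsinh_le_self {x : ℝ} (hx : 0 ≤ x) : Real.arsinh x ≤ x := by
  simpa only [Real.sinh_arsinh] using Real.self_le_sinh_iff.2 (Real.arsinh_nonneg_iff.2 hx)

theorem self_le_arsinh {x : ℝ} (hx : x ≤ 0) : x ≤ Real.arsinh x := by
  simpa only [Real.sinh_arsinh] using Real.sinh_le_self_iff.2 (Real.arsinh_nonpos_iff.2 hx)

theorem mul_arsinh_le_sq (x : ℝ) : x * Real.arsinh x ≤ x ^ 2 := by
  rw [sq]
  rcases le_total 0 x with hx | hx
  · exact mul_le_mul_of_nonneg_left (arsinh_le_self hx) hx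
  · exact mul_le_mul_of_nonpos_left (self_le_arsinh hx) hx

theorem abs_sqrt_one_add_sq_sub_mul_arsinh_sub_one_le (x : ℝ) :
    |√(1 + x ^ 2) - x * Real.arsinh x - 1| ≤ x ^ 2 := by
  have one_le_sqrt : 1 ≤ √(1 + x ^ 2) := Real.one_le_sqrt.2 (by linarith [sq_nonneg x])
  have sqrt_le : √(1 + x ^ 2) ≤ 1 + x ^ 2 / 2 :=
    Real.sqrt_one_add_le (by linarith [sq_nonneg x])
  rw [abs_le]
  constructor <;> linarith [mul_arsinh_nonneg x, mul_arsinh_le_sq x, sq_nonneg x]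

theorem sqrt_sq_add_sq_eq_mul {r : ℝ} (hr : 0 < r) (ε : ℝ) :
    √(r ^ 2 + ε ^ 2) = r * √(1 + (ε / r) ^ 2) := by
  rw [← Real.sqrt_sq hr.le, ← Real.sqrt_mul (sq_nonneg r), Real.sqrt_sq hr.le]
  congr 1
  field_simp

theorem log_div_sqrt_sq_add_sq_add_eq_neg_arsinh {r : ℝ} (hr : 0 < r) (ε : ℝ) :
    Real.log (r / (√(r ^ 2 + ε ^ 2) + ε)) = -Real.arsinh (ε / r) := by
  have exp_arsinh_div : Real.exp (Real.arsinh (ε / r)) = (√(r ^ 2 + ε ^ 2) + ε) / r := by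
    rw [Real.exp_arsinh, sqrt_sq_add_sq_eq_mul hr]
    field_simp
    ring
  rw [← inv_div, Real.log_inv, ← exp_arsinh_div, Real.log_exp]

theorem eguchiHanson_eq_norm_sq_mul (ε : ℝ) {z : EuclideanSpace ℂ (Fin 2)} (hz : z ≠ 0) :
    eguchiHanson ε z = ‖z‖ ^ 2 *
      (√(1 + (ε / ‖z‖ ^ 2) ^ 2) - ε / ‖z‖ ^ 2 * Real.arsinh (ε / ‖z‖ ^ 2)) := by
  have hr : 0 < ‖z‖ ^ 2 := by positivity
  have norm_pow_four : ‖z‖ ^ 4 = (‖z‖ ^ 2) ^ 2 := by ring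
  rw [eguchiHanson, norm_pow_four, log_div_sqrt_sq_add_sq_add_eq_neg_arsinh hr,
    sqrt_sq_add_sq_eq_mul hr]
  field_simp
  ring

theorem abs_eguchiHanson_sub_norm_sq_le (ε : ℝ) {z : EuclideanSpace ℂ (Fin 2)} (hz : z ≠ 0) :
    |eguchiHanson ε z - ‖z‖ ^ 2| ≤ ε ^ 2 / ‖z‖ ^ 2 := by
  set t := ε / ‖z‖ ^ 2 with ht
  calc |eguchiHanson ε z - ‖z‖ ^ 2|
      = ‖z‖ ^ 2 * |√(1 + t ^ 2) - t * Real.arsinh t - 1| := by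
        rw [eguchiHanson_eq_norm_sq_mul ε hz, ← mul_sub_one, abs_mul, abs_sq]
    _ ≤ ‖z‖ ^ 2 * t ^ 2 := by
        gcongr
        exact abs_sqrt_one_add_sq_sub_mul_arsinh_sub_one_le t
    _ = ε ^ 2 / ‖z‖ ^ 2 := by
        rw [ht]
        field_simp

theorem exists_pos_forall_le_norm_of_zero_notMem_closure {E : Type*} [SeminormedAddCommGroup E]
    {s : Set E} (hs : (0 : E) ∉ closure s) : ∃ δ > 0, ∀ x ∈ s, δ ≤ ‖x‖ := by
  simpa only [Metric.mem_closure_iff, dist_zero_left, not_forall, not_exists, not_and, not_lt,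
    exists_prop] using hs

theorem tendstoUniformlyOn_eguchiHanson {K : Set (EuclideanSpace ℂ (Fin 2))}
    (hK : (0 : EuclideanSpace ℂ (Fin 2)) ∉ closure K) :
    TendstoUniformlyOn eguchiHanson (fun z ↦ ‖z‖ ^ 2) (𝓝 0) K := by
  obtain ⟨δ, hδ, le_norm⟩ := exists_pos_forall_le_norm_of_zero_notMem_closure hK
  have bound : ∀ ε, ∀ z ∈ K, |eguchiHanson ε z - ‖z‖ ^ 2| ≤ ε ^ 2 / δ ^ 2 := fun ε z hz ↦ by
    have hδz : δ ≤ ‖z‖ := le_norm z hz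
    calc |eguchiHanson ε z - ‖z‖ ^ 2|
        ≤ ε ^ 2 / ‖z‖ ^ 2 :=
          abs_eguchiHanson_sub_norm_sq_le ε (norm_pos_iff.1 (hδ.trans_le hδz))
      _ ≤ ε ^ 2 / δ ^ 2 := by gcongr
  have bound_tendsto : Tendsto (fun ε : ℝ ↦ ε ^ 2 / δ ^ 2) (𝓝 0) (𝓝 0) :=
    Continuous.tendsto' (by fun_prop) 0 0 (by simp)
  rw [Metric.tendstoUniformlyOn_iff]
  intro η hη
  filter_upwards [bound_tendsto.eventually_lt_const hη] with ε hε z hz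
  rw [dist_comm, Real.dist_eq]
  exact (bound ε z hz).trans_lt hε

theorem tendsto_biSup_abs_sub_of_tendstoUniformlyOn {ι α : Type*} {l : Filter ι}
    {F : ι → α → ℝ} {f : α → ℝ} {s : Set α} (h : TendstoUniformlyOn F f l s) :
    Tendsto (fun i ↦ ⨆ x ∈ s, |F i x - f x|) l (𝓝 0) := by
  rw [Metric.tendstoUniformlyOn_iff] at h
  have biSup_nonneg : ∀ i, 0 ≤ ⨆ x ∈ s, |F i x - f x| := fun i ↦
    Real.iSup_nonneg fun x ↦ Real.iSup_nonneg fun _ ↦ abs_nonneg _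
  refine Metric.tendsto_nhds.2 fun η hη ↦ ?_
  filter_upwards [h (η / 2) (half_pos hη)] with i hi
  have abs_sub_le : ∀ x ∈ s, |F i x - f x| ≤ η / 2 := fun x hx ↦ by
    simpa only [dist_comm, Real.dist_eq] using (hi x hx).le
  have biSup_le : ⨆ x ∈ s, |F i x - f x| ≤ η / 2 :=
    Real.iSup_le (fun x ↦ Real.iSup_le (abs_sub_le x) (half_pos hη).le) (half_pos hη).le
  rw [Real.dist_0_eq_abs, abs_of_nonneg (biSup_nonneg i)]
  exact biSup_le.trans_lt (half_lt_self hη)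

theorem eguchiHanson_tendsto_uniformly_on_compact_general
    (K : Set (EuclideanSpace ℂ (Fin 2))) (h0 : (0 : EuclideanSpace ℂ (Fin 2)) ∉ closure K) :
    Tendsto (fun ε : ℝ => ⨆ z ∈ K, |eguchiHanson ε z - ‖z‖ ^ 2|) (𝓝 0) (𝓝 0) :=
  tendsto_biSup_abs_sub_of_tendstoUniformlyOn (tendstoUniformlyOn_eguchiHanson h0)

/-- On every compact subset `K` of `ℂ² ∖ {0}`, the Eguchi–Hanson potentials `F_ε`
converge uniformly to the Euclidean potential `‖z‖²` as `ε → 0⁺`: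
`sup_{z ∈ K} |F_ε(z) − ‖z‖²| → 0`. -/
theorem eguchiHanson_tendsto_uniformly_on_compact
    (K : Set (EuclideanSpace ℂ (Fin 2))) (hK : IsCompact K) (h0 : (0 : EuclideanSpace ℂ (Fin 2)) ∉ K) :
    Tendsto (fun ε : ℝ => ⨆ z ∈ K, |eguchiHanson ε z - ‖z‖ ^ 2|)
      (𝓝[>] (0 : ℝ)) (𝓝 0) :=
  (eguchiHanson_tendsto_uniformly_on_compact_general K (hK.isClosed.closure_eq.symm ▸ h0)).mono_left
    nhdsWithin_le_nhds
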